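/- arXiv:1004.3723 — 9 statements merged into one kernel-verified Lean document; each statement's English description precedes it below -/
import Mathlib

section
/- Let X be an involutive rack and let a, b, c ∈ X be such that a ⊳ a = a. If b ⊳ a = c ⊳ a and a ⊳ b = c ⊳ b, then a ⊳ (b ⊳ a) = b ⊳ a. -/
open Quandles

/-- Let X be an involutive rack and let a, b, c ∈ X be such that a ⊳ a = a.
If b ⊳ a = c ⊳ a and a ⊳ b = c ⊳ b, then a ⊳ (b ⊳ a) = b ⊳ a. -/
theorem involutions_abc {X : Type*} [Rack X] (hinv : Rack.IsInvolutory X) (a b c : X)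
    (ha : a ◃ a = a) (h1 : b ◃ a = c ◃ a) (h2 : a ◃ b = c ◃ b) :
    a ◃ (b ◃ a) = b ◃ a := by
  have inv : ∀ x y : X, x ◃ (x ◃ y) = y := fun x y => hinv x y
  have sd : ∀ x y z : X, x ◃ (y ◃ z) = (x ◃ y) ◃ (x ◃ z) := fun x y z => Shelf.self_distrib
  calc a ◃ (b ◃ a) = (c ◃ b) ◃ a := by rw [sd, ha, h2]
    _ = (c ◃ b) ◃ (c ◃ (c ◃ a)) := by rw [inv c a]
    _ = c ◃ (b ◃ (c ◃ a)) := (sd _ _ _).symm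
    _ = c ◃ a := by rw [← h1, inv b a, h1]
    _ = b ◃ a := h1.symm
end

section
/- Let X be a rack, let k ∈ ℕ, let i_1, …, i_k, l ∈ X, and let ε_1, …, ε_k ∈ {1, −1}. If l is a fixed point of the permutation φ_{i_1}^{ε_1} φ_{i_2}^{ε_2} ⋯ φ_{i_k}^{ε_k}, then the element x_{i_1}^{ε_1} x_{i_2}^{ε_2} ⋯ x_{i_k}^{ε_k} of the enveloping group G_X commutes with x_l. Conversely, if X is injective and x_{i_1}^{ε_1} x_{i_2}^{ε_2} ⋯ x_{i_k}^{ε_k} commutes with x_l in G_X, then l is a fixed point of φ_{i_1}^{ε_1} φ_{i_2}^{ε_2} ⋯ φ_{i_k}^{ε_k}. -/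
open Quandles

theorem aux_act {X : Type*} [Rack X] (a m : X) :
    ((Rack.toEnvelGroup X (Rack.act' a m)) : Rack.EnvelGroup X) =
      @HMul.hMul (Rack.EnvelGroup X) (Rack.EnvelGroup X) (Rack.EnvelGroup X) _
        (@HMul.hMul (Rack.EnvelGroup X) (Rack.EnvelGroup X) (Rack.EnvelGroup X) _
          (Rack.toEnvelGroup X a) (Rack.toEnvelGroup X m))
        (@Inv.inv (Rack.EnvelGroup X) _ (Rack.toEnvelGroup X a)) :=
  (Rack.toEnvelGroup X).map_act

/-- generic version with plain functions -/
theorem aux_gen {X G : Type*} [Group G] (φ : X → Equiv.Perm X) (x : X → G)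
    (h : ∀ a m, x (φ a m) = x a * x m * (x a)⁻¹) :
    ∀ {k : ℕ} (i : Fin k → X) (ε : Fin k → ℤ), (∀ t, ε t = 1 ∨ ε t = -1) → ∀ l : X,
      x ((List.ofFn fun t => φ (i t) ^ ε t).prod l) =
        (List.ofFn fun t => x (i t) ^ ε t).prod * x l *
          ((List.ofFn fun t => x (i t) ^ ε t).prod)⁻¹ := by
  intro k
  induction k with
  | zero => intro i ε hε l; simp
  | succ n ih =>
    intro i ε hε l
    have key : ∀ m, x ((φ (i 0) ^ ε 0) m) = x (i 0) ^ ε 0 * x m * (x (i 0) ^ ε 0)⁻¹ := by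
      intro m
      rcases hε 0 with h0 | h0
      · rw [h0]; simpa using h (i 0) m
      · rw [h0]
        have := h (i 0) ((φ (i 0))⁻¹ m)
        rw [show φ (i 0) ((φ (i 0))⁻¹ m) = m from (φ (i 0)).apply_symm_apply m] at this
        simp only [zpow_neg, zpow_one, this]
        group
    have := ih (fun t => i t.succ) (fun t => ε t.succ) (fun t => hε _) l
    simp only [List.ofFn_succ, List.prod_cons, Equiv.Perm.mul_apply]
    rw [key, this]
    group

theorem aux_iff {X G : Type*} [Group G] (φ : X → Equiv.Perm X) (x : X → G)
    (h : ∀ a m, x (φ a m) = x a * x m * (x a)⁻¹)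
    {k : ℕ} (i : Fin k → X) (ε : Fin k → ℤ) (hε : ∀ t, ε t = 1 ∨ ε t = -1) (l : X) :
    ((List.ofFn fun t => φ (i t) ^ ε t).prod l = l →
      Commute (List.ofFn fun t => x (i t) ^ ε t).prod (x l)) ∧
    (Function.Injective x → Commute (List.ofFn fun t => x (i t) ^ ε t).prod (x l) →
      (List.ofFn fun t => φ (i t) ^ ε t).prod l = l) := by
  have H := aux_gen φ x h i ε hε l
  refine ⟨fun e => ?_, fun hx c => hx ?_⟩
  · rw [e, eq_mul_inv_iff_mul_eq] at H
    exact H.symm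
  · rw [H, mul_inv_eq_iff_eq_mul]
    exact c

/-- Let X be a rack, k ∈ ℕ, i₁, …, i_k, l ∈ X and ε₁, …, ε_k ∈ {1, −1}.
If l is a fixed point of φ_{i₁}^{ε₁} ⋯ φ_{i_k}^{ε_k}, then
x_{i₁}^{ε₁} ⋯ x_{i_k}^{ε_k} commutes with x_l in the enveloping group G_X;
the converse holds if X is injective. -/
theorem fixed_point_iff_commutes {X : Type*} [Rack X] {k : ℕ} (i : Fin k → X) (ε : Fin k → ℤ)
    (hε : ∀ t, ε t = 1 ∨ ε t = -1) (l : X) :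
    (((List.ofFn fun t => (Rack.act' (i t) : Equiv.Perm X) ^ ε t).prod l = l →
        Commute ((List.ofFn fun t => (Rack.toEnvelGroup X (i t) : Rack.EnvelGroup X) ^ ε t).prod)
          (Rack.toEnvelGroup X l : Rack.EnvelGroup X)) ∧
      ((Function.Injective fun j : X => (Rack.toEnvelGroup X j : Rack.EnvelGroup X)) →
        Commute ((List.ofFn fun t => (Rack.toEnvelGroup X (i t) : Rack.EnvelGroup X) ^ ε t).prod)
          (Rack.toEnvelGroup X l : Rack.EnvelGroup X) →
        (List.ofFn fun t => (Rack.act' (i t) : Equiv.Perm X) ^ ε t).prod l = l)) :=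
  aux_iff (G := Rack.EnvelGroup X) (fun a => Rack.act' a)
    (fun j => (Rack.toEnvelGroup X j : Rack.EnvelGroup X)) aux_act i ε hε l
end

section
/- Let X be an injective rack. Then the inner group Inn(X) is isomorphic to the quotient G_X/Z(G_X) of the enveloping group by its center. -/
open Quandles

theorem envel_induction {X : Type*} [Rack X] {p : Rack.EnvelGroup X → Prop}
    (h1 : p 1) (hi : ∀ i : X, p (Rack.toEnvelGroup X i : Rack.EnvelGroup X))
    (hm : ∀ a b, p a → p b → p (a * b)) (hv : ∀ a, p a → p a⁻¹) (g : Rack.EnvelGroup X) :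
    p g := by
  induction g using Quotient.inductionOn with
  | h a =>
    induction a with
    | unit => exact h1
    | incl x => exact hi x
    | mul a b ha hb => exact hm _ _ ha hb
    | inv a ha => exact hv _ ha

theorem envel_gen {X : Type*} [Rack X] (i : X) :
    Rack.envelAction (Rack.toEnvelGroup X i : Rack.EnvelGroup X) = Rack.act' i := by
  ext y
  exact Rack.envelAction_prop i y

theorem envel_conj {X : Type*} [Rack X] (g : Rack.EnvelGroup X) : ∀ i : X,
    g * (Rack.toEnvelGroup X i : Rack.EnvelGroup X) * g⁻¹ =
      (Rack.toEnvelGroup X (Rack.envelAction g i) : Rack.EnvelGroup X) := by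
  induction g using envel_induction with
  | h1 => intro i; simp
  | hi j =>
    intro i
    rw [Rack.envelAction_prop]
    exact (ShelfHom.map_act (Rack.toEnvelGroup X) (x := j) (y := i)).symm
  | hm a b ha hb =>
    intro i
    rw [map_mul, Equiv.Perm.mul_apply, ← ha, ← hb]
    group
  | hv a ha =>
    intro i
    have h := ha ((Rack.envelAction a⁻¹) i)
    rw [← Equiv.Perm.mul_apply, ← map_mul, mul_inv_cancel, map_one, Equiv.Perm.one_apply] at h
    rw [← h]
    group

theorem envel_range {X : Type*} [Rack X] :
    (Rack.envelAction (R := X)).range =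
      Subgroup.closure (Set.range fun i : X => (Rack.act' i : Equiv.Perm X)) := by
  apply le_antisymm
  · rintro _ ⟨g, rfl⟩
    induction g using envel_induction with
    | h1 => rw [map_one]; exact one_mem _
    | hi j => rw [envel_gen]; exact Subgroup.subset_closure ⟨j, rfl⟩
    | hm a b ha hb => rw [map_mul]; exact mul_mem ha hb
    | hv a ha => rw [map_inv]; exact inv_mem ha
  · rw [Subgroup.closure_le]
    rintro _ ⟨i, rfl⟩
    exact ⟨_, envel_gen i⟩

theorem envel_ker {X : Type*} [Rack X]
    (hinj : Function.Injective fun i : X => (Rack.toEnvelGroup X i : Rack.EnvelGroup X)) :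
    (Rack.envelAction (R := X)).ker = Subgroup.center (Rack.EnvelGroup X) := by
  ext g
  rw [MonoidHom.mem_ker, Subgroup.mem_center_iff]
  constructor
  · intro hg k
    induction k using envel_induction with
    | h1 => simp
    | hi j =>
      have h := envel_conj g j
      rw [hg, Equiv.Perm.one_apply, mul_inv_eq_iff_eq_mul] at h
      exact h.symm
    | hm a b ha hb => rw [mul_assoc, hb, ← mul_assoc, ha, mul_assoc]
    | hv a ha => exact ((show Commute a g from ha).inv_left)
  · intro hg
    ext i
    apply hinj
    have h := envel_conj g i
    rw [← hg, mul_inv_cancel_right] at h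
    exact h.symm

/-- Let X be an injective rack.  Then the inner group Inn(X), i.e. the subgroup of the
symmetric group of X generated by the permutations φ_i, is isomorphic to the quotient
G_X/Z(G_X) of the enveloping group by its center. -/
theorem inn_iso_envel_mod_center {X : Type*} [Rack X]
    (hinj : Function.Injective fun i : X => (Rack.toEnvelGroup X i : Rack.EnvelGroup X)) :
    Nonempty
      ((Subgroup.closure (Set.range fun i : X => (Rack.act' i : Equiv.Perm X))) ≃*
        Rack.EnvelGroup X ⧸ Subgroup.center (Rack.EnvelGroup X)) :=
  ⟨(MulEquiv.subgroupCongr envel_range.symm).trans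
    ((QuotientGroup.quotientKerEquivRange (Rack.envelAction (R := X))).symm.trans
      (QuotientGroup.quotientMulEquivOfEq (envel_ker hinj)))⟩
end

section
/- Let X be a finite rack, let i ∈ X, and let n be the order of the permutation φ_i of X. Then x_i^n lies in the center Z(G_X) of the enveloping group G_X. -/
open Quandles

theorem envel_gen_pow_conj {X : Type*} [Rack X] (i : X) (n : ℕ) (j : X) (g : Rack.EnvelGroup X)
    (hg : g = Rack.toEnvelGroup X i) :
    g ^ n * (show Rack.EnvelGroup X from Rack.toEnvelGroup X j) * (g ^ n)⁻¹ =
      (show Rack.EnvelGroup X from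
        Rack.toEnvelGroup X (((Rack.act' i : Equiv.Perm X) ^ n) j)) := by
  induction n with
  | zero => simp
  | succ n ih =>
    have h : (show Rack.EnvelGroup X from Rack.toEnvelGroup X
        (((Rack.act' i : Equiv.Perm X) ^ (n + 1)) j)) =
        g * (show Rack.EnvelGroup X from
          Rack.toEnvelGroup X (((Rack.act' i : Equiv.Perm X) ^ n) j)) * g⁻¹ := by
      rw [pow_succ', hg]
      exact (Rack.toEnvelGroup X).map_act
    rw [h, ← ih, pow_succ']
    group

/-- Let X be a finite rack, i ∈ X and n the order of the permutation φ_i of X.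
Then x_i^n lies in the center of the enveloping group G_X. -/
theorem envel_power_central {X : Type*} [Rack X] [Finite X] (i : X) :
    (Rack.toEnvelGroup X i : Rack.EnvelGroup X) ^ orderOf (Rack.act' i : Equiv.Perm X) ∈
      Subgroup.center (Rack.EnvelGroup X) := by
  obtain ⟨g, hg⟩ : ∃ g : Rack.EnvelGroup X, g = Rack.toEnvelGroup X i := ⟨_, rfl⟩
  have key : ∀ j : X, (show Rack.EnvelGroup X from Rack.toEnvelGroup X j) ∈
      Subgroup.centralizer {g ^ orderOf (Rack.act' i : Equiv.Perm X)} := by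
    intro j
    rw [Subgroup.mem_centralizer_singleton_iff]
    have h := envel_gen_pow_conj i (orderOf (Rack.act' i : Equiv.Perm X)) j g hg
    rw [pow_orderOf_eq_one, mul_inv_eq_iff_eq_mul] at h
    exact h.symm
  have all : ∀ a : Rack.PreEnvelGroup X, (show Rack.EnvelGroup X from Quotient.mk _ a) ∈
      Subgroup.centralizer {g ^ orderOf (Rack.act' i : Equiv.Perm X)} := by
    intro a
    induction a with
    | unit => exact Subgroup.one_mem _
    | incl x => exact key x
    | mul a b ha hb => exact Subgroup.mul_mem _ ha hb
    | inv a ha => exact Subgroup.inv_mem _ ha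
  have fin : g ^ orderOf (Rack.act' i : Equiv.Perm X) ∈
      Subgroup.center (Rack.EnvelGroup X) := by
    rw [Subgroup.mem_center_iff]
    intro a
    induction a using Quotient.inductionOn with
    | h a => exact Subgroup.mem_centralizer_singleton_iff.mp (all a)
  rw [hg] at fin
  exact fin
end

section
/- Let X be a finite indecomposable rack. Then all permutations φ_i, i ∈ X, have the same order n, and moreover x_i^n = x_j^n in the enveloping group G_X for all i, j ∈ X. -/
open Quandles

theorem aux_act_s9 {X : Type*} [Rack X] (k x : X) :
    (Rack.toEnvelGroup X (k ◃ x) : Rack.EnvelGroup X) =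
      (Rack.toEnvelGroup X k : Rack.EnvelGroup X) * (Rack.toEnvelGroup X x : Rack.EnvelGroup X) *
        (Rack.toEnvelGroup X k : Rack.EnvelGroup X)⁻¹ :=
  (Rack.toEnvelGroup X).map_act

theorem aux_pow {G X : Type*} [Group G] [Rack X] (e : X → G)
    (he : ∀ k x, e (k ◃ x) = e k * e x * (e k)⁻¹) (x y : X) (m : ℕ) :
    e x ^ m * e y = e (((Rack.act' x : Equiv.Perm X) ^ m) y) * e x ^ m := by
  induction m with
  | zero => simp
  | succ m ih =>
    rw [pow_succ' (Rack.act' x : Equiv.Perm X), Equiv.Perm.mul_apply, Rack.act'_apply, he,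
      pow_succ', mul_assoc, ih]
    group

theorem aux_step {G X : Type*} [Group G] [Rack X] (e : X → G)
    (he : ∀ k x, e (k ◃ x) = e k * e x * (e k)⁻¹) (k x : X) :
    orderOf (Rack.act' (k ◃ x) : Equiv.Perm X) = orderOf (Rack.act' x : Equiv.Perm X) ∧
      e (k ◃ x) ^ orderOf (Rack.act' (k ◃ x) : Equiv.Perm X) =
        e x ^ orderOf (Rack.act' x : Equiv.Perm X) := by
  have h : orderOf (Rack.act' (k ◃ x) : Equiv.Perm X) = orderOf (Rack.act' x : Equiv.Perm X) := by
    rw [Rack.ad_conj, ← MulAut.conj_apply]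
    exact MulEquiv.orderOf_eq (MulAut.conj (Rack.act' k : Equiv.Perm X)) _
  refine ⟨h, ?_⟩
  rw [h, he, conj_pow]
  have := aux_pow e he x k (orderOf (Rack.act' x : Equiv.Perm X))
  rw [pow_orderOf_eq_one, Equiv.Perm.one_apply] at this
  rw [← this, mul_inv_cancel_right]

theorem aux_main {G X : Type*} [Group G] [Rack X] (e : X → G)
    (he : ∀ k x, e (k ◃ x) = e k * e x * (e k)⁻¹)
    (hind : ∀ x y : X,
      ∃ f ∈ Subgroup.closure (Set.range fun i : X => (Rack.act' i : Equiv.Perm X)), f x = y)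
    (i j : X) :
    orderOf (Rack.act' i : Equiv.Perm X) = orderOf (Rack.act' j : Equiv.Perm X) ∧
      e i ^ orderOf (Rack.act' i : Equiv.Perm X) =
        e j ^ orderOf (Rack.act' i : Equiv.Perm X) := by
  let g : X → ℕ × G := fun x => (orderOf (Rack.act' x : Equiv.Perm X),
    e x ^ orderOf (Rack.act' x : Equiv.Perm X))
  obtain ⟨f, hf, rfl⟩ := hind i j
  have key : ∀ x, g (f x) = g x := by
    induction hf using Subgroup.closure_induction with
    | mem f hf =>
      obtain ⟨k, rfl⟩ := hf
      intro x
      exact Prod.ext (aux_step e he k x).1 (aux_step e he k x).2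
    | one => intro x; rfl
    | mul a b _ _ ha hb => intro x; rw [Equiv.Perm.mul_apply, ha, hb]
    | inv a _ ha => intro x; rw [← ha, ← Equiv.Perm.mul_apply, mul_inv_cancel, Equiv.Perm.one_apply]
  have h := key i
  have h1 : orderOf (Rack.act' (f i) : Equiv.Perm X) = orderOf (Rack.act' i : Equiv.Perm X) :=
    congrArg Prod.fst h
  have h2 : e (f i) ^ orderOf (Rack.act' (f i) : Equiv.Perm X) =
    e i ^ orderOf (Rack.act' i : Equiv.Perm X) := congrArg Prod.snd h
  refine ⟨h1.symm, ?_⟩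
  rw [← h2, h1]

/-- Let X be a finite indecomposable rack (the inner group, generated by the φ_i,
acts transitively on X).  Then all permutations φ_i have the same order n, and
x_i^n = x_j^n in the enveloping group G_X for all i, j ∈ X. -/
theorem same_order_and_equal_powers {X : Type*} [Rack X] [Finite X]
    (hind : ∀ x y : X,
      ∃ f ∈ Subgroup.closure (Set.range fun i : X => (Rack.act' i : Equiv.Perm X)), f x = y)
    (i j : X) :
    orderOf (Rack.act' i : Equiv.Perm X) = orderOf (Rack.act' j : Equiv.Perm X) ∧
      (Rack.toEnvelGroup X i : Rack.EnvelGroup X) ^ orderOf (Rack.act' i : Equiv.Perm X) =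
        (Rack.toEnvelGroup X j : Rack.EnvelGroup X) ^ orderOf (Rack.act' i : Equiv.Perm X) := by
  exact aux_main (G := Rack.EnvelGroup X) (fun x => Rack.toEnvelGroup X x) aux_act_s9 hind i j
end

section
/- Let X be a finite indecomposable rack, fix an element 1 ∈ X, let n be the order of φ_1, and let π : G_X → Ḡ_X = G_X/⟨x_1^n⟩ be the canonical projection. Then: (1) the centralizer of x_1 in G_X equals the preimage under π of the centralizer of π(x_1) in Ḡ_X; (2) if the centralizer of π(x_1) in Ḡ_X is abelian, then the centralizer of x_1 in G_X is abelian; (3) if the centralizer of π(x_1) in Ḡ_X is the cyclic group generated by π(x_1), then the centralizer of x_1 in G_X is the cyclic group generated by x_1. -/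
open Quandles

theorem comm_of_quot {G : Type*} [Group G] (d : G →* Multiplicative ℤ) (x : G)
    (hd : d x = Multiplicative.ofAdd 1) (n : ℕ) (hn : 0 < n)
    [(Subgroup.zpowers (x ^ n)).Normal] (a b : G)
    (h : QuotientGroup.mk' (Subgroup.zpowers (x ^ n)) (a * b) =
      QuotientGroup.mk' (Subgroup.zpowers (x ^ n)) (b * a)) : a * b = b * a := by
  have h1 : (a * b)⁻¹ * (b * a) ∈ Subgroup.zpowers (x ^ n) := QuotientGroup.eq.1 h
  obtain ⟨k, hk⟩ := Subgroup.mem_zpowers_iff.1 h1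
  have h2 := congrArg d hk
  have h3 : d ((a * b)⁻¹ * (b * a)) = 1 := by
    simp only [map_mul, map_inv]
    rw [mul_comm (d b), inv_mul_cancel]
  rw [h3, map_zpow, map_pow, hd] at h2
  have h4 : k * (n : ℤ) = 0 := by
    have := congrArg Multiplicative.toAdd h2
    simpa using this
  have h5 : k = 0 := by
    rcases mul_eq_zero.1 h4 with h | h
    · exact h
    · omega
  rw [h5, zpow_zero] at hk
  exact (inv_mul_eq_one.1 hk.symm)

theorem grp_main {G : Type*} [Group G] (d : G →* Multiplicative ℤ) (x : G)
    (hd : d x = Multiplicative.ofAdd 1) (n : ℕ) (hn : 0 < n)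
    [(Subgroup.zpowers (x ^ n)).Normal] :
    (Subgroup.centralizer {x} = Subgroup.comap (QuotientGroup.mk' (Subgroup.zpowers (x ^ n)))
      (Subgroup.centralizer {QuotientGroup.mk' (Subgroup.zpowers (x ^ n)) x})) ∧
    ((∀ a ∈ Subgroup.centralizer {QuotientGroup.mk' (Subgroup.zpowers (x ^ n)) x},
      ∀ b ∈ Subgroup.centralizer {QuotientGroup.mk' (Subgroup.zpowers (x ^ n)) x},
        a * b = b * a) →
      ∀ a ∈ Subgroup.centralizer {x}, ∀ b ∈ Subgroup.centralizer {x}, a * b = b * a) ∧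
    (Subgroup.centralizer {QuotientGroup.mk' (Subgroup.zpowers (x ^ n)) x} =
      Subgroup.zpowers (QuotientGroup.mk' (Subgroup.zpowers (x ^ n)) x) →
      Subgroup.centralizer {x} = Subgroup.zpowers x) := by
  have h1 : Subgroup.centralizer {x} =
      Subgroup.comap (QuotientGroup.mk' (Subgroup.zpowers (x ^ n)))
        (Subgroup.centralizer {QuotientGroup.mk' (Subgroup.zpowers (x ^ n)) x}) := by
    ext g
    rw [Subgroup.mem_comap, Subgroup.mem_centralizer_singleton_iff,
      Subgroup.mem_centralizer_singleton_iff, ← map_mul, ← map_mul]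
    exact ⟨fun h => congrArg _ h, fun h => comm_of_quot d x hd n hn _ _ h⟩
  refine ⟨h1, ?_, ?_⟩
  · intro h a ha b hb
    rw [h1, Subgroup.mem_comap] at ha hb
    apply comm_of_quot d x hd n hn
    rw [map_mul, map_mul]
    exact h _ ha _ hb
  · intro h
    apply le_antisymm
    · intro g hg
      rw [h1, Subgroup.mem_comap, h] at hg
      obtain ⟨m, hm⟩ := Subgroup.mem_zpowers_iff.1 hg
      rw [← map_zpow] at hm
      have h2 : (x ^ m)⁻¹ * g ∈ Subgroup.zpowers (x ^ n) := QuotientGroup.eq.1 hm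
      have h3 : Subgroup.zpowers (x ^ n) ≤ Subgroup.zpowers x :=
        Subgroup.zpowers_le.2 (Subgroup.npow_mem_zpowers x n)
      have h4 := mul_mem (Subgroup.zpow_mem_zpowers x m) (h3 h2)
      simpa using h4
    · rw [Subgroup.zpowers_le, Subgroup.mem_centralizer_singleton_iff]

/-- The degree map. -/
def rackDeg (X : Type*) [Rack X] : ShelfHom X (Quandle.Conj (Multiplicative ℤ)) where
  toFun _ := (Multiplicative.ofAdd (1 : ℤ) : Multiplicative ℤ)
  map_act' := by
    intro x y
    exact (mul_inv_cancel_right (Multiplicative.ofAdd (1 : ℤ)) (Multiplicative.ofAdd (1 : ℤ))).symm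

/-- Let X be a finite indecomposable rack, fix 1 ∈ X (here `x1`), let n be the order of
φ_1, and let π : G_X → Ḡ_X = G_X/⟨x_1^n⟩ be the canonical projection (the subgroup
⟨x_1^n⟩ is normal since x_1^n is central).  Then:
(1) the centralizer of x_1 in G_X equals the preimage under π of the centralizer of
π(x_1) in Ḡ_X;
(2) if the centralizer of π(x_1) in Ḡ_X is abelian, then so is the centralizer of x_1
in G_X;
(3) if the centralizer of π(x_1) in Ḡ_X is the cyclic group generated by π(x_1), then
the centralizer of x_1 in G_X is the cyclic group generated by x_1. -/
theorem envel_centralizer_lift {X : Type*} [Rack X] [Finite X]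
    (hind : ∀ x y : X,
      ∃ f ∈ Subgroup.closure (Set.range fun i : X => (Rack.act' i : Equiv.Perm X)), f x = y)
    (x1 : X)
    [(Subgroup.zpowers ((Rack.toEnvelGroup X x1 : Rack.EnvelGroup X) ^ orderOf (Rack.act' x1 : Equiv.Perm X))).Normal] :
    (Subgroup.centralizer {(Rack.toEnvelGroup X x1 : Rack.EnvelGroup X)} =
        Subgroup.comap (QuotientGroup.mk' (Subgroup.zpowers ((Rack.toEnvelGroup X x1 : Rack.EnvelGroup X) ^ orderOf (Rack.act' x1 : Equiv.Perm X))))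
          (Subgroup.centralizer {(QuotientGroup.mk' (Subgroup.zpowers ((Rack.toEnvelGroup X x1 : Rack.EnvelGroup X) ^ orderOf (Rack.act' x1 : Equiv.Perm X)))) (Rack.toEnvelGroup X x1 : Rack.EnvelGroup X)})) ∧
      ((∀ a ∈ Subgroup.centralizer {(QuotientGroup.mk' (Subgroup.zpowers ((Rack.toEnvelGroup X x1 : Rack.EnvelGroup X) ^ orderOf (Rack.act' x1 : Equiv.Perm X)))) (Rack.toEnvelGroup X x1 : Rack.EnvelGroup X)},
          ∀ b ∈ Subgroup.centralizer {(QuotientGroup.mk' (Subgroup.zpowers ((Rack.toEnvelGroup X x1 : Rack.EnvelGroup X) ^ orderOf (Rack.act' x1 : Equiv.Perm X)))) (Rack.toEnvelGroup X x1 : Rack.EnvelGroup X)}, a * b = b * a) →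
        ∀ a ∈ Subgroup.centralizer {(Rack.toEnvelGroup X x1 : Rack.EnvelGroup X)},
          ∀ b ∈ Subgroup.centralizer {(Rack.toEnvelGroup X x1 : Rack.EnvelGroup X)}, a * b = b * a) ∧
      (Subgroup.centralizer {(QuotientGroup.mk' (Subgroup.zpowers ((Rack.toEnvelGroup X x1 : Rack.EnvelGroup X) ^ orderOf (Rack.act' x1 : Equiv.Perm X)))) (Rack.toEnvelGroup X x1 : Rack.EnvelGroup X)} =
          Subgroup.zpowers ((QuotientGroup.mk' (Subgroup.zpowers ((Rack.toEnvelGroup X x1 : Rack.EnvelGroup X) ^ orderOf (Rack.act' x1 : Equiv.Perm X)))) (Rack.toEnvelGroup X x1 : Rack.EnvelGroup X)) →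
        Subgroup.centralizer {(Rack.toEnvelGroup X x1 : Rack.EnvelGroup X)} = Subgroup.zpowers (Rack.toEnvelGroup X x1 : Rack.EnvelGroup X)) := by
  exact grp_main (G := Rack.EnvelGroup X) (Rack.toEnvelGroup.map (rackDeg X))
    (Rack.toEnvelGroup X x1) rfl _ (orderOf_pos _)
end

section
/- Let G be a group and let X be a finite conjugacy class of G generating G with d = #X > 1, viewed as a rack under conjugation. Then: (1) for all i, j, k ∈ X, if 𝒪(i,j) = 𝒪(i,k) then j = k, and if 𝒪(i,j) = 𝒪(k,j) then i = k; (2) #𝒪(i,j) ≤ d for all i, j ∈ X. -/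
open Quandles

/-- The conjugacy class of `g` in `G`, as a type. -/
def ConjClass (G : Type*) [Group G] (g : G) : Type _ := {h : G // IsConj g h}

namespace ConjClass

variable {G : Type*} [Group G] {g : G}

/-- The conjugacy class of `g`, viewed as a rack under conjugation. -/
instance : Rack (ConjClass G g) where
  act x y := ⟨x.1 * y.1 * x.1⁻¹, y.2.trans (isConj_iff.mpr ⟨x.1, rfl⟩)⟩
  self_distrib := by
    rintro ⟨x, hx⟩ ⟨y, hy⟩ ⟨z, hz⟩
    apply Subtype.ext
    show x * (y * z * y⁻¹) * x⁻¹ = x * y * x⁻¹ * (x * z * x⁻¹) * (x * y * x⁻¹)⁻¹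
    group
  invAct x y := ⟨x.1⁻¹ * y.1 * x.1, y.2.trans (isConj_iff.mpr ⟨x.1⁻¹, by group⟩)⟩
  left_inv := by
    rintro ⟨x, hx⟩ ⟨y, hy⟩
    apply Subtype.ext
    show x⁻¹ * (x * y * x⁻¹) * x = y
    group
  right_inv := by
    rintro ⟨x, hx⟩ ⟨y, hy⟩
    apply Subtype.ext
    show x * (x⁻¹ * y * x) * x⁻¹ = y
    group

end ConjClass

/-- The braiding `c(i,j) = (i ◃ j, i)` on `X × X`, as a permutation. -/
def rackBraid (R : Type*) [Rack R] : Equiv.Perm (R × R) where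
  toFun p := (p.1 ◃ p.2, p.1)
  invFun p := (p.2, p.2 ◃⁻¹ p.1)
  left_inv := by
    rintro ⟨a, b⟩
    simp
  right_inv := by
    rintro ⟨a, b⟩
    simp

/-- The orbit `𝒪(i,j)` of a pair under the cyclic group generated by the braiding. -/
def rackOrbit {R : Type*} [Rack R] (p : R × R) : Set (R × R) :=
  {q | ∃ m : ℤ, (rackBraid R ^ m) p = q}

/-- `kNum i n` is the number of `j` such that the orbit `𝒪(i,j)` has `n` elements. -/
noncomputable def kNum {R : Type*} [Rack R] (i : R) (n : ℕ) : ℕ :=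
  Nat.card {j : R // Nat.card ↥(rackOrbit (i, j)) = n}

/-- `lNum R n` is the number of orbits of the braiding on `R × R` having `n` elements. -/
noncomputable def lNum (R : Type*) [Rack R] (n : ℕ) : ℕ :=
  Nat.card {O : Set (R × R) // (∃ p, O = rackOrbit p) ∧ Nat.card ↥O = n}

theorem rackBraid_prod {G : Type*} [Group G] {g : G} (p : ConjClass G g × ConjClass G g) :
    ((rackBraid (ConjClass G g)) p).1.1 * ((rackBraid (ConjClass G g)) p).2.1 = p.1.1 * p.2.1 := by
  show (p.1.1 * p.2.1 * p.1.1⁻¹) * p.1.1 = p.1.1 * p.2.1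
  group

theorem rackBraid_zpow_prod {G : Type*} [Group G] {g : G} (m : ℤ) :
    ∀ p : ConjClass G g × ConjClass G g,
    ((rackBraid (ConjClass G g) ^ m) p).1.1 * ((rackBraid (ConjClass G g) ^ m) p).2.1
      = p.1.1 * p.2.1 := by
  induction m using Int.induction_on with
  | zero => intro p; simp
  | succ n ih =>
    intro p
    rw [zpow_add_one, Equiv.Perm.mul_apply, ih, rackBraid_prod]
  | pred n ih =>
    intro p
    rw [zpow_sub_one, Equiv.Perm.mul_apply, ih, ← rackBraid_prod,
      ← Equiv.Perm.mul_apply, mul_inv_cancel, Equiv.Perm.one_apply]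

theorem rackOrbit_prod {G : Type*} [Group G] {g : G} {p q : ConjClass G g × ConjClass G g}
    (h : q ∈ rackOrbit p) : q.1.1 * q.2.1 = p.1.1 * p.2.1 := by
  obtain ⟨m, rfl⟩ := h
  exact rackBraid_zpow_prod m p

theorem rackOrbit_self {R : Type*} [Rack R] (p : R × R) : p ∈ rackOrbit p := ⟨0, by simp⟩

/-- Let X be a finite conjugacy class of a group G which generates G, with d = #X > 1,
viewed as a rack under conjugation.  Then:
(1) for i, j, k ∈ X, if 𝒪(i,j) = 𝒪(i,k) then j = k, and if 𝒪(i,j) = 𝒪(k,j) then i = k;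
(2) #𝒪(i,j) ≤ d for all i, j ∈ X. -/
theorem orbit_inj_and_size_bound {G : Type*} [Group G] (g : G) [Finite (ConjClass G g)]
    (hgen : Subgroup.closure {h : G | IsConj g h} = ⊤)
    (hd : 1 < Nat.card (ConjClass G g)) :
    (∀ i j k : ConjClass G g,
        (rackOrbit (i, j) = rackOrbit (i, k) → j = k) ∧
        (rackOrbit (i, j) = rackOrbit (k, j) → i = k)) ∧
      ∀ i j : ConjClass G g, Nat.card ↥(rackOrbit (i, j)) ≤ Nat.card (ConjClass G g) := by
  refine ⟨fun i j k => ⟨fun h => ?_, fun h => ?_⟩, fun i j => ?_⟩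
  · have := rackOrbit_prod (h ▸ rackOrbit_self (i, j))
    exact Subtype.ext (mul_left_cancel this)
  · have := rackOrbit_prod (h ▸ rackOrbit_self (i, j))
    exact Subtype.ext (mul_right_cancel this)
  · refine Nat.card_le_card_of_injective (fun q : ↥(rackOrbit (i, j)) => q.1.1) ?_
    rintro ⟨⟨a, b⟩, hq⟩ ⟨⟨a', b'⟩, hq'⟩ (h : a = a')
    subst h
    have h1 := (rackOrbit_prod hq).trans (rackOrbit_prod hq').symm
    have h2 : b = b' := Subtype.ext (mul_left_cancel h1)
    subst h2
    rfl
end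

section
/- Let G be a group and let X be a finite conjugacy class of G generating G with d = #X > 1, viewed as a rack under conjugation. Let x, y ∈ X and n ∈ ℕ with n ≥ 1. The following are equivalent: (1) the H-orbit 𝒪(x,y) has exactly n elements; (2) x ▸_n y = y and x ▸_k y ≠ y for all k ∈ {1, …, n−1}; (3) y ▸_n x = x and y ▸_k x ≠ x for all k ∈ {1, …, n−1}; (4) Prod(x̄, ȳ; n) = Prod(ȳ, x̄; n) in the enveloping group G_X and Prod(x̄, ȳ; k) ≠ Prod(ȳ, x̄; k) for all k ∈ {1, …, n−1}. -/
open Quandles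

/-- `nact n x y` is `x ▸ₙ y = x ◃ (y ◃ (x ◃ ⋯))` with `n` factors from the rack
(meaningful for `n ≥ 1`; `nact 0 x y` is the junk value `y`). -/
def nact {R : Type*} [Rack R] : ℕ → R → R → R
  | 0, _, y => y
  | 1, x, _ => x
  | n + 2, x, y => x ◃ nact (n + 1) y x

/-- `altProd v w n = Prod(v, w; n) = v·w·v·w·⋯` with `n` factors, `altProd v w 0 = 1`. -/
def altProd {G : Type*} [Group G] : G → G → ℕ → G
  | _, _, 0 => 1
  | v, w, n + 1 => v * altProd w v n

theorem nact_succ_aux {G : Type*} [Group G] {g : G} (m : ℕ) (x y : ConjClass G g) :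
    nact (m + 1) x y ◃ nact m x y = nact (m + 2) x y := by
  induction m generalizing x y with
  | zero => rfl
  | succ m ih =>
    cases m with
    | zero =>
      apply Subtype.ext
      show x.1 * y.1 * x.1⁻¹ * x.1 * (x.1 * y.1 * x.1⁻¹)⁻¹ = x.1 * (y.1 * x.1 * y.1⁻¹) * x.1⁻¹
      group
    | succ m =>
      show (x ◃ nact (m + 2) y x) ◃ (x ◃ nact (m + 1) y x) = x ◃ nact (m + 3) y x
      rw [← Shelf.self_distrib, ih]

theorem braid_iter {G : Type*} [Group G] {g : G} (m : ℕ) (x y : ConjClass G g) :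
    (rackBraid (ConjClass G g))^[m] (x, y) = (nact (m + 1) x y, nact m x y) := by
  induction m with
  | zero => rfl
  | succ m ih =>
    rw [Function.iterate_succ_apply', ih]
    show (nact (m + 1) x y ◃ nact m x y, nact (m + 1) x y) = _
    rw [nact_succ_aux]

theorem nact_prod {G : Type*} [Group G] {g : G} (m : ℕ) (x y : ConjClass G g) :
    (nact (m + 1) x y).1 * (nact m x y).1 = x.1 * y.1 := by
  induction m with
  | zero => rfl
  | succ m ih =>
    rw [← nact_succ_aux, ← ih]
    show (nact (m + 1) x y).1 * (nact m x y).1 * (nact (m + 1) x y).1⁻¹ * (nact (m + 1) x y).1 = _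
    group

theorem nact_iff {G : Type*} [Group G] {g : G} (m : ℕ) (x y : ConjClass G g) :
    nact (m + 1) x y = x ↔ nact m x y = y := by
  have h := nact_prod m x y
  constructor
  · intro h1
    rw [h1] at h
    exact Subtype.ext (mul_left_cancel h)
  · intro h1
    rw [h1] at h
    exact Subtype.ext (mul_right_cancel h)

theorem nact_symm {G : Type*} [Group G] {g : G} (m : ℕ) (hm : 1 ≤ m) (x y : ConjClass G g) :
    nact m y x = x ↔ nact m x y = y := by
  obtain ⟨m, rfl⟩ := Nat.exists_eq_add_of_le' hm
  rw [← nact_iff (m + 1) x y]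
  show _ ↔ x ◃ nact (m + 1) y x = x
  have hx : x ◃ x = x := by
    apply Subtype.ext
    show x.1 * x.1 * x.1⁻¹ = x.1
    group
  constructor
  · intro h
    rw [h, hx]
  · intro h
    exact (Rack.left_cancel x).1 (h.trans hx.symm)

theorem braid_period {G : Type*} [Group G] {g : G} (m : ℕ) (x y : ConjClass G g) :
    Function.IsPeriodicPt (rackBraid (ConjClass G g)) m (x, y) ↔ nact m x y = y := by
  rw [Function.IsPeriodicPt, Function.IsFixedPt, braid_iter, Prod.mk.injEq, nact_iff, and_self]

theorem orbit_card {R : Type*} [Rack R] (p : R × R) :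
    Nat.card ↥(rackOrbit p) = Function.minimalPeriod (rackBraid R) p := by
  have h : rackOrbit p = MulAction.orbit (Subgroup.zpowers (rackBraid R)) p := by
    ext q
    constructor
    · rintro ⟨m, rfl⟩
      exact ⟨⟨rackBraid R ^ m, m, rfl⟩, rfl⟩
    · rintro ⟨⟨_, m, rfl⟩, rfl⟩
      exact ⟨m, rfl⟩
  rw [h, Nat.card_congr (MulAction.orbitZPowersEquiv (rackBraid R) p), Nat.card_zmod]
  rfl

theorem altProd_nact {G : Type*} [Group G] {g : G} (m : ℕ) (x y : ConjClass G g) :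
    (Rack.toEnvelGroup (ConjClass G g) (nact (m + 1) x y) : Rack.EnvelGroup (ConjClass G g)) *
      altProd (Rack.toEnvelGroup (ConjClass G g) x : Rack.EnvelGroup (ConjClass G g))
        (Rack.toEnvelGroup (ConjClass G g) y) m =
      altProd (Rack.toEnvelGroup (ConjClass G g) x : Rack.EnvelGroup (ConjClass G g))
        (Rack.toEnvelGroup (ConjClass G g) y) (m + 1) := by
  induction m generalizing x y with
  | zero => rfl
  | succ m ih =>
    rw [altProd.eq_2 _ _ (m + 1), ← ih y x, altProd.eq_2 _ _ m]
    show (Rack.toEnvelGroup (ConjClass G g) (x ◃ nact (m + 1) y x) :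
      Rack.EnvelGroup (ConjClass G g)) * (_ * _) = _
    have h : (Rack.toEnvelGroup (ConjClass G g) (x ◃ nact (m + 1) y x) :
        Rack.EnvelGroup (ConjClass G g)) =
        (Rack.toEnvelGroup (ConjClass G g) x : Rack.EnvelGroup (ConjClass G g)) *
        (Rack.toEnvelGroup (ConjClass G g) (nact (m + 1) y x) : Rack.EnvelGroup (ConjClass G g)) *
        (Rack.toEnvelGroup (ConjClass G g) x : Rack.EnvelGroup (ConjClass G g))⁻¹ :=
      (Rack.toEnvelGroup (ConjClass G g)).map_act
    rw [h]
    group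

theorem envel_inj {G : Type*} [Group G] {g : G} (x y : ConjClass G g)
    (h : (Rack.toEnvelGroup (ConjClass G g) x : Rack.EnvelGroup (ConjClass G g)) =
      Rack.toEnvelGroup (ConjClass G g) y) : x = y := by
  let f : ConjClass G g →◃ Quandle.Conj G := ⟨fun z => z.1, fun {a b} => rfl⟩
  have h2 := congrArg (Rack.toEnvelGroup.map f) h
  exact Subtype.ext h2

theorem altProd_iff {G : Type*} [Group G] {g : G} (m : ℕ) (hm : 1 ≤ m) (x y : ConjClass G g) :
    altProd (Rack.toEnvelGroup (ConjClass G g) x : Rack.EnvelGroup (ConjClass G g))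
        (Rack.toEnvelGroup (ConjClass G g) y) m =
      altProd (Rack.toEnvelGroup (ConjClass G g) y : Rack.EnvelGroup (ConjClass G g))
        (Rack.toEnvelGroup (ConjClass G g) x) m ↔ nact m x y = y := by
  obtain ⟨m, rfl⟩ := Nat.exists_eq_add_of_le' hm
  rw [← altProd_nact m x y, altProd]
  constructor
  · intro h
    exact envel_inj _ _ (mul_right_cancel h)
  · intro h
    rw [h]

theorem orbit_iff {G : Type*} [Group G] {g : G} (x y : ConjClass G g) (n : ℕ) (hn : 1 ≤ n)
    (P : ℕ → Prop) (hP : ∀ m, 1 ≤ m → (P m ↔ nact m x y = y)) :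
    Nat.card ↥(rackOrbit (x, y)) = n ↔ (P n ∧ ∀ k : ℕ, 1 ≤ k → k ≤ n - 1 → ¬ P k) := by
  rw [orbit_card]
  constructor
  · rintro rfl
    refine ⟨(hP _ hn).2 ((braid_period _ x y).1 (Function.isPeriodicPt_minimalPeriod _ _)), ?_⟩
    intro k hk hk2 h
    have := ((braid_period _ x y).2 ((hP _ hk).1 h)).minimalPeriod_le hk
    omega
  · rintro ⟨h1, h2⟩
    have h3 := (braid_period _ x y).2 ((hP _ hn).1 h1)
    have h4 := h3.minimalPeriod_le hn
    have h5 := h3.minimalPeriod_pos hn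
    by_contra hne
    exact h2 _ h5 (by omega) ((hP _ h5).2
      ((braid_period _ x y).1 (Function.isPeriodicPt_minimalPeriod _ _)))

/-- Let X be a finite conjugacy class of a group G which generates G, with d = #X > 1,
viewed as a rack under conjugation.  For x, y ∈ X and n ≥ 1 the following are
equivalent: (1) the orbit 𝒪(x,y) of the braiding has exactly n elements;
(2) x ▸ₙ y = y and x ▸ₖ y ≠ y for 1 ≤ k ≤ n−1;
(3) y ▸ₙ x = x and y ▸ₖ x ≠ x for 1 ≤ k ≤ n−1;
(4) Prod(x̄, ȳ; n) = Prod(ȳ, x̄; n) in the enveloping group G_X and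
Prod(x̄, ȳ; k) ≠ Prod(ȳ, x̄; k) for 1 ≤ k ≤ n−1. -/
theorem orbit_size_equivalences {G : Type*} [Group G] (g : G) [Finite (ConjClass G g)]
    (hgen : Subgroup.closure {h : G | IsConj g h} = ⊤)
    (hd : 1 < Nat.card (ConjClass G g))
    (x y : ConjClass G g) (n : ℕ) (hn : 1 ≤ n) :
    ((Nat.card ↥(rackOrbit (x, y)) = n ↔
        (nact n x y = y ∧ ∀ k : ℕ, 1 ≤ k → k ≤ n - 1 → nact k x y ≠ y)) ∧
      (Nat.card ↥(rackOrbit (x, y)) = n ↔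
        (nact n y x = x ∧ ∀ k : ℕ, 1 ≤ k → k ≤ n - 1 → nact k y x ≠ x)) ∧
      (Nat.card ↥(rackOrbit (x, y)) = n ↔
        (altProd (Rack.toEnvelGroup (ConjClass G g) x : Rack.EnvelGroup (ConjClass G g))
              (Rack.toEnvelGroup (ConjClass G g) y) n =
            altProd (Rack.toEnvelGroup (ConjClass G g) y : Rack.EnvelGroup (ConjClass G g))
              (Rack.toEnvelGroup (ConjClass G g) x) n ∧
          ∀ k : ℕ, 1 ≤ k → k ≤ n - 1 →
            altProd (Rack.toEnvelGroup (ConjClass G g) x : Rack.EnvelGroup (ConjClass G g))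
                (Rack.toEnvelGroup (ConjClass G g) y) k ≠
              altProd (Rack.toEnvelGroup (ConjClass G g) y : Rack.EnvelGroup (ConjClass G g))
                (Rack.toEnvelGroup (ConjClass G g) x) k))) := by
  exact ⟨orbit_iff x y n hn _ (fun m _ => Iff.rfl),
    orbit_iff x y n hn (fun m => nact m y x = x) (fun m hm => nact_symm m hm x y),
    orbit_iff x y n hn (fun m => altProd _ _ m = altProd _ _ m)
      (fun m hm => altProd_iff m hm x y)⟩
end

section
/- Let G be a group and let X be a finite conjugacy class of G generating G with d = #X > 1, viewed as a rack under conjugation, and let m = d − k_2 − 1. If ∑_{n≥3} ((n−2)/(2n))·k_n ≤ 1, then 2 ≤ m ≤ 6. -/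
open Quandles

theorem aux_orbit {R : Type*} [Rack R] [Finite R] (p : R × R) :
    Nat.card ↥(rackOrbit p) = Function.minimalPeriod (rackBraid R) p := by
  have : rackOrbit p = MulAction.orbit (Subgroup.zpowers (rackBraid R)) p := by
    ext q
    constructor
    · rintro ⟨m, hm⟩
      exact ⟨⟨rackBraid R ^ m, m, rfl⟩, hm⟩
    · rintro ⟨⟨_, m, rfl⟩, hm⟩
      exact ⟨m, hm⟩
  rw [this]
  have : Fintype (MulAction.orbit (Subgroup.zpowers (rackBraid R)) p) := Fintype.ofFinite _
  rw [Nat.card_eq_fintype_card, ← MulAction.minimalPeriod_eq_card]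
  rfl

theorem aux_act_s18 {G : Type*} [Group G] {g : G} (x y : ConjClass G g) :
    (x ◃ y).1 = x.1 * y.1 * x.1⁻¹ := rfl

theorem aux_one {G : Type*} [Group G] {g : G} [Finite (ConjClass G g)] (i j : ConjClass G g) :
    Nat.card ↥(rackOrbit (i, j)) = 1 ↔ j = i := by
  rw [aux_orbit, Function.minimalPeriod_eq_one_iff_isFixedPt]
  constructor
  · intro h
    exact (congrArg Prod.snd h).symm
  · rintro rfl
    have : j ◃ j = j := Subtype.ext (by rw [aux_act_s18]; group)
    exact Prod.ext this rfl

theorem aux_two {G : Type*} [Group G] {g : G} [Finite (ConjClass G g)] (i j : ConjClass G g) :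
    Nat.card ↥(rackOrbit (i, j)) ∣ 2 ↔ i.1 * j.1 = j.1 * i.1 := by
  rw [aux_orbit, ← Function.isPeriodicPt_iff_minimalPeriod_dvd]
  constructor
  · intro h
    have : i ◃ j = j := congrArg Prod.snd h
    have := congrArg Subtype.val this
    rw [aux_act_s18] at this
    exact mul_inv_eq_iff_eq_mul.mp this
  · intro h
    have h1 : i ◃ j = j := Subtype.ext (by rw [aux_act_s18, h]; group)
    have h2 : j ◃ i = i := Subtype.ext (by rw [aux_act_s18, ← h]; group)
    show ((i ◃ j) ◃ i, i ◃ j) = (i, j)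
    rw [h1, h2]

theorem aux_pos {R : Type*} [Rack R] [Finite R] (p : R × R) :
    0 < Nat.card ↥(rackOrbit p) := by
  have : Nonempty ↥(rackOrbit p) := ⟨⟨p, 0, rfl⟩⟩
  exact Nat.card_pos

/-- Let X be a finite conjugacy class of a group G which generates G, with d = #X > 1,
viewed as a rack under conjugation, and let m = d − k₂ − 1.  If
∑_{n≥3} ((n−2)/(2n))·k_n ≤ 1, then 2 ≤ m ≤ 6.
(The sum is re-indexed: the term for n = j+3 has coefficient (j+1)/(2(j+3)).) -/
theorem two_le_m_le_six {G : Type*} [Group G] (g : G) [Finite (ConjClass G g)]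
    (hgen : Subgroup.closure {h : G | IsConj g h} = ⊤)
    (hd : 1 < Nat.card (ConjClass G g)) (i : ConjClass G g)
    (hS : ∑' n : ℕ, (((n : ℚ) + 1) / (2 * ((n : ℚ) + 3))) * (kNum i (n + 3) : ℚ) ≤ 1) :
    2 ≤ Nat.card (ConjClass G g) - kNum i 2 - 1 ∧
      Nat.card (ConjClass G g) - kNum i 2 - 1 ≤ 6 := by
  classical
  have : Fintype (ConjClass G g) := Fintype.ofFinite _
  set N : ConjClass G g → ℕ := fun j => Nat.card ↥(rackOrbit (i, j)) with hN
  have hpos : ∀ j, 0 < N j := fun j => aux_pos _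
  have hk : ∀ n, kNum i n = (Finset.univ.filter fun j => N j = n).card := by
    intro n
    unfold kNum
    rw [Nat.card_eq_fintype_card, Fintype.card_subtype]
  set A := Finset.univ.filter fun j => 3 ≤ N j with hA
  have hmem : ∀ j, j ∈ A ↔ ¬ i.1 * j.1 = j.1 * i.1 := by
    intro j
    rw [← aux_two, hA, Finset.mem_filter]
    change _ ∧ 3 ≤ N j ↔ ¬ N j ∣ 2
    have := hpos j
    rw [Nat.dvd_prime Nat.prime_two]
    simp only [Finset.mem_univ, true_and]
    omega
  have hk1 : (Finset.univ.filter fun j => N j = 1).card = 1 := by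
    rw [Finset.card_eq_one]
    refine ⟨i, ?_⟩
    ext j
    rw [Finset.mem_filter, Finset.mem_singleton]
    exact ⟨fun h => (aux_one i j).mp h.2, fun h => ⟨Finset.mem_univ _, (aux_one i j).mpr h⟩⟩
  have hcard : Nat.card (ConjClass G g) = kNum i 2 + 1 + A.card := by
    rw [Nat.card_eq_fintype_card, hk, ← hk1, hA, ← Finset.card_univ, ← Finset.card_union_of_disjoint,
      ← Finset.card_union_of_disjoint]
    · congr 1
      ext j
      have := hpos j
      simp only [Finset.mem_univ, Finset.mem_union, Finset.mem_filter, true_and, true_iff]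
      omega
    · rw [Finset.disjoint_left]
      intro j
      simp only [Finset.mem_univ, Finset.mem_union, Finset.mem_filter, true_and]
      omega
    · rw [Finset.disjoint_left]
      intro j
      simp only [Finset.mem_univ, Finset.mem_filter, true_and]
      omega
  have hm : Nat.card (ConjClass G g) - kNum i 2 - 1 = A.card := by omega
  rw [hm]
  constructor
  · by_contra hlt
    have hcases : A.card = 0 ∨ A.card = 1 := by omega
    rcases hcases with h0 | h1
    · have hcomm : ∀ x : G, i.1 * x = x * i.1 := by
        have hle : Subgroup.closure {h : G | IsConj g h} ≤ Subgroup.centralizer {i.1} := by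
          rw [Subgroup.closure_le]
          intro h hh
          have hall : ∀ j : ConjClass G g, i.1 * j.1 = j.1 * i.1 := by
            intro j
            by_contra hc
            have hjA := (hmem j).mpr hc
            rw [Finset.card_eq_zero.mp h0] at hjA
            simp at hjA
          have hnot := hall ⟨h, hh⟩
          exact Subgroup.mem_centralizer_singleton_iff.mpr hnot.symm
        intro x
        have hx : x ∈ Subgroup.centralizer {i.1} := hle (hgen ▸ Subgroup.mem_top x)
        exact (Subgroup.mem_centralizer_singleton_iff.mp hx).symm
      rw [Nat.card_eq_fintype_card, Fintype.one_lt_card_iff] at hd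
      obtain ⟨a, b, hab⟩ := hd
      have hall : ∀ a : ConjClass G g, a = i := by
        intro a
        obtain ⟨c, hc⟩ := isConj_iff.mp (i.2.symm.trans a.2)
        apply Subtype.ext
        rw [← hc, ← hcomm]; group
      exact hab ((hall a).trans (hall b).symm)
    · obtain ⟨j, hj⟩ := Finset.card_eq_one.mp h1
      have hjA : j ∈ A := by rw [hj]; simp
      have hij : i ◃ j ∈ A := by
        rw [hmem] at hjA ⊢
        intro h
        apply hjA
        rw [aux_act_s18] at h
        have h' : i.1 * (i.1 * j.1 * i.1⁻¹) = i.1 * j.1 := by rw [h]; group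
        have h2 := mul_left_cancel h'
        exact mul_inv_eq_iff_eq_mul.mp h2
      rw [hj, Finset.mem_singleton] at hij
      rw [hmem] at hjA
      apply hjA
      have h3 := congrArg Subtype.val hij
      rw [aux_act_s18] at h3
      exact mul_inv_eq_iff_eq_mul.mp h3
  · set M := Finset.univ.sup N + 1 with hM
    have hle : ∀ j, N j < M := fun j => Nat.lt_succ_of_le (Finset.le_sup (Finset.mem_univ j))
    rw [tsum_eq_sum (s := Finset.range M)] at hS
    · have hsum : A.card = ∑ n ∈ Finset.range M, kNum i (n + 3) := by
        rw [Finset.card_eq_sum_card_fiberwise (f := fun j => N j - 3) (t := Finset.range M)]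
        · apply Finset.sum_congr rfl
          intro n _
          rw [hk, hA, Finset.filter_filter]
          congr 1
          ext j
          simp only [Finset.mem_univ, Finset.mem_filter, true_and]
          omega
        · intro j _
          have := hle j
          simp only [Finset.coe_range, Set.mem_Iio]
          omega
      have hlow : ∑ n ∈ Finset.range M, (1 / 6 : ℚ) * (kNum i (n + 3) : ℚ) ≤ 1 := by
        refine le_trans (Finset.sum_le_sum ?_) hS
        intro n _
        apply mul_le_mul_of_nonneg_right _ (Nat.cast_nonneg _)
        have hn : (0 : ℚ) ≤ n := Nat.cast_nonneg n
        rw [div_le_div_iff₀ (by norm_num) (by positivity)]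
        linarith
      rw [← Finset.mul_sum, ← Nat.cast_sum, ← hsum] at hlow
      have : (A.card : ℚ) ≤ 6 := by linarith
      exact_mod_cast this
    · intro n hn
      have : kNum i (n + 3) = 0 := by
        rw [hk, Finset.card_eq_zero, Finset.filter_eq_empty_iff]
        intro j _ h
        have := hle j
        rw [Finset.mem_range] at hn
        omega
      rw [this]; simp
end
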